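/- Let R be a PID and M a finitely generated R-module. Then Ext^1_R(M, R) is isomorphic as an R-module to the torsion submodule of M. -/

import Mathlib

open CategoryTheory

/-- The `R`-module `Ext¹_R(M, N)`. -/
noncomputable def ext1 (R : Type) [CommRing R] (M N : Type)
    [AddCommGroup M] [Module R M] [AddCommGroup N] [Module R N] : ModuleCat R :=
  ((Ext R (ModuleCat R) 1).obj (Opposite.op (ModuleCat.of R M))).obj (ModuleCat.of R N)

/-!
Split `M` as `T × Q` with `T` its torsion and `Q` free, and write `T` as the cokernel of a diagonal
map `D : R^ι → R^ι` with nonzero entries. Then `0 → R^ι → R^ι × Q → M → 0` is a projective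
resolution, so `Ext¹(M, N)` is the cokernel of `Hom(R^ι × Q, N) → Hom(R^ι, N)`. The factor `Q`
contributes nothing to the image, and what is left is the transpose of `D` tensored with `N`. Since
a diagonal map is its own transpose, the cokernel is `T ⊗ N`, which is `T` for `N = R`.
-/

universe u v

section Category

variable {C : Type*} [Category* C] [Abelian C] {S : ShortComplex C}

/-- The chain complex `⋯ ⟶ 0 ⟶ X₁ ⟶ X₀` with `X₀` in degree zero, encoded as an augmentation of
`X₁` so that its differential `1 ⟶ 0` is definitionally `f`. -/
noncomputable def twoTermComplex {X₁ X₀ : C} (f : X₁ ⟶ X₀) : ChainComplex C ℕ :=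
  ((ChainComplex.single₀ C).obj X₁).augment f Limits.zero_comp

/-- A short exact sequence whose first two terms are projective, viewed as a projective resolution
of length one of its third term. -/
noncomputable def projectiveResolutionOfShortExact (hS : S.ShortExact)
    [Projective S.X₁] [Projective S.X₂] : ProjectiveResolution S.X₃ where
  complex := twoTermComplex S.f
  projective
    | 0 => ‹Projective S.X₂›
    | 1 => ‹Projective S.X₁›
    | n + 2 =>
      (HomologicalComplex.isZero_single_obj_X (.down ℕ) 0 S.X₁ (n + 1) (by simp)).projective
  π := (ChainComplex.toSingle₀Equiv _ _).symm ⟨S.g, S.zero⟩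
  quasiIso := ⟨by
    rintro (_ | _ | n)
    · rw [ChainComplex.quasiIsoAt₀_iff, ShortComplex.quasiIso_iff_of_zeros' _ rfl rfl rfl]
      refine (ShortComplex.exact_and_epi_g_iff_of_iso ?_).2 ⟨hS.exact, hS.epi_g⟩
      refine ShortComplex.isoMk (Iso.refl S.X₁) (Iso.refl S.X₂) (Iso.refl S.X₃) ?_ ?_
      · exact (Category.id_comp S.f).trans (Category.comp_id S.f).symm
      · have hπ := ChainComplex.toSingle₀Equiv_symm_apply_f_zero
          (C := twoTermComplex S.f) S.g S.zero
        exact (Category.id_comp S.g).trans (hπ.symm.trans (Category.comp_id _).symm)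
    · rw [quasiIsoAt_iff_exactAt' _ _ (ChainComplex.exactAt_succ_single_obj _ _),
        HomologicalComplex.exactAt_iff' _ 2 1 0 (by simp) (by simp),
        ShortComplex.exact_iff_mono _ rfl]
      exact hS.mono_f
    · rw [quasiIsoAt_iff_exactAt' _ _ (ChainComplex.exactAt_succ_single_obj _ _)]
      exact ShortComplex.exact_of_isZero_X₂ _
        (HomologicalComplex.isZero_single_obj_X (.down ℕ) 0 S.X₁ (n + 1) (by simp))⟩

/-- `Ext¹` of the third term of a short exact sequence with projective first two terms, as the
cokernel of `Hom(S.X₂, Y) ⟶ Hom(S.X₁, Y)`. -/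
noncomputable def extOneIsoCokernel (R : Type*) [Ring R] [Linear R C] [EnoughProjectives C]
    (hS : S.ShortExact) [Projective S.X₁] [Projective S.X₂] (Y : C) :
    ((Ext R C 1).obj (.op S.X₃)).obj Y ≅
      Limits.cokernel (((linearYoneda R C).obj Y).map S.f.op) :=
  let P := projectiveResolutionOfShortExact hS
  let K := (P.complex.linearYonedaObj R Y).sc' 0 1 2
  have hg : K.g = 0 := ((linearYoneda R C).obj Y).map_zero _ _
  P.isoExt 1 Y ≪≫ (P.complex.linearYonedaObj R Y).homologyIsoSc' 0 1 2 (by simp) (by simp) ≪≫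
    (ShortComplex.LeftHomologyData.ofHasCokernel K hg).homologyIso

end Category

section Module

open scoped TensorProduct
open LinearMap Module

section Splitting

variable {R M : Type*} [Ring R] [AddCommGroup M] [Module R M]

lemma nonempty_equiv_prod_quotient (p : Submodule R M) [Projective R (M ⧸ p)] :
    Nonempty (M ≃ₗ[R] p × M ⧸ p) := by
  obtain ⟨s, hs⟩ := projective_lifting_property p.mkQ .id p.mkQ_surjective
  exact ⟨(lequivProdOfRightSplitExact p.injective_subtype
    (by rw [p.range_subtype, p.ker_mkQ]) hs).symm⟩

end Splitting

section Duality

variable {R P₁ P₀ : Type*} [CommRing R]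
  [AddCommGroup P₁] [Module R P₁] [AddCommGroup P₀] [Module R P₀]
  (N : Type*) [AddCommGroup N] [Module R N]

lemma range_lcomp_inl_comp {Q : Type*} [AddCommGroup Q] [Module R Q] (f : P₁ →ₗ[R] P₀) :
    range ((inl R P₀ Q ∘ₗ f).lcomp R N) = range (f.lcomp R N) := by
  have inl_lcomp_surjective : Function.Surjective ((inl R P₀ Q).lcomp R N) :=
    fun φ ↦ ⟨φ ∘ₗ fst R P₀ Q, by ext; simp⟩
  exact range_comp_of_range_eq_top (f.lcomp R N) (range_eq_top.2 inl_lcomp_surjective)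

lemma map_dualTensorHom_range_rTensor_dualMap [Module.Finite R P₀] [Projective R P₀]
    (f : P₁ →ₗ[R] P₀) :
    (range (f.dualMap.rTensor N)).map (dualTensorHom R P₁ N) = range (f.lcomp R N) := by
  rw [← range_comp, dualTensorHom_comp_rTensor_dualMap]
  exact range_comp_of_range_eq_top _ (range_eq_top.2 (dualTensorHomEquiv R P₀ N).surjective)

/-- For finite projective modules, tensoring the cokernel of `Hom(P₀, R) → Hom(P₁, R)` with `N`
gives the cokernel of `Hom(P₀, N) → Hom(P₁, N)`. -/
noncomputable def tensorQuotientRangeDualMapEquiv [Module.Finite R P₁] [Projective R P₁]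
    [Module.Finite R P₀] [Projective R P₀] (f : P₁ →ₗ[R] P₀) :
    (Dual R P₁ ⧸ range f.dualMap) ⊗[R] N ≃ₗ[R] (P₁ →ₗ[R] N) ⧸ range (f.lcomp R N) :=
  (rTensor.equiv N (exact_map_mkQ_range f.dualMap) (Submodule.mkQ_surjective _)).symm ≪≫ₗ
    Submodule.Quotient.equiv _ _ (dualTensorHomEquiv R P₁ N)
      (map_dualTensorHom_range_rTensor_dualMap N f)

end Duality

section Ext

variable {R : Type u} [CommRing R] [Small.{v} R] {P₁ P₀ M : Type v}
  [AddCommGroup P₁] [Module R P₁] [Projective R P₁]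
  [AddCommGroup P₀] [Module R P₀] [Projective R P₀]
  [AddCommGroup M] [Module R M]
  (N : Type v) [AddCommGroup N] [Module R N]

/-- `Ext¹(M, N)` computed from a projective resolution `0 → P₁ → P₀ → M → 0`. -/
noncomputable def extOneEquivQuotientRangeLcomp {f : P₁ →ₗ[R] P₀} {g : P₀ →ₗ[R] M}
    (hf : Function.Injective f) (hfg : Function.Exact f g) (hg : Function.Surjective g) :
    ((Ext R (ModuleCat.{v} R) 1).obj (.op (.of R M))).obj (.of R N) ≃ₗ[R]
      (P₁ →ₗ[R] N) ⧸ range (f.lcomp R N) :=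
  let S := ModuleCat.shortComplexOfCompEqZero f g hfg.linearMap_comp_eq_zero
  have hS : S.ShortExact := ModuleCat.shortComplex_shortExact S hfg hf hg
  have : CategoryTheory.Projective S.X₁ :=
    ModuleCat.projective_of_categoryTheory_projective (.of R P₁)
  have : CategoryTheory.Projective S.X₂ :=
    ModuleCat.projective_of_categoryTheory_projective (.of R P₀)
  (extOneIsoCokernel R hS (.of R N) ≪≫ ModuleCat.cokernelIsoRangeQuotient _).toLinearEquiv ≪≫ₗ
    Submodule.Quotient.equiv _ _ (ModuleCat.homLinearEquiv (S := R)) (by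
      rw [← range_comp]
      ext φ
      constructor
      · rintro ⟨ψ, rfl⟩
        exact ⟨ψ.hom, rfl⟩
      · rintro ⟨ψ, rfl⟩
        exact ⟨ModuleCat.ofHom ψ, rfl⟩)

/-- `Ext¹(M, N)` when `M` is, up to the projective summand `Q`, the cokernel of an injective map
`f` of finite projective modules: it is `Ext¹(M, R) ⊗ N`, where `Ext¹(M, R)` is the cokernel of the
transpose of `f`. -/
noncomputable def extOneEquivTensor [Module.Finite R P₁] [Module.Finite R P₀]
    {Q : Type v} [AddCommGroup Q] [Module R Q] [Projective R Q]
    {f : P₁ →ₗ[R] P₀} (hf : Function.Injective f) (e : M ≃ₗ[R] (P₀ ⧸ range f) × Q) :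
    ((Ext R (ModuleCat.{v} R) 1).obj (.op (.of R M))).obj (.of R N) ≃ₗ[R]
      (Dual R P₁ ⧸ range f.dualMap) ⊗[R] N :=
  have hexact : Function.Exact (inl R P₀ Q ∘ₗ f) (e.symm ∘ₗ (range f).mkQ.prodMap .id) := by
    rw [LinearEquiv.postcomp_exact_iff_exact, exact_iff, ker_prodMap, range_comp]
    simp [Submodule.map_inl]
  have hsurj : Function.Surjective (e.symm.toLinearMap ∘ₗ (range f).mkQ.prodMap .id) :=
    e.symm.surjective.comp ((range f).mkQ_surjective.prodMap Function.surjective_id)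
  extOneEquivQuotientRangeLcomp N (inl_injective.comp hf) hexact hsurj ≪≫ₗ
    Submodule.quotEquivOfEq _ _ (range_lcomp_inl_comp N f) ≪≫ₗ
    (tensorQuotientRangeDualMapEquiv N f).symm

end Ext

section Diagonal

variable {R ι : Type*} [CommRing R]

lemma range_mulLeft_pi (a : ι → R) :
    range (mulLeft R a) = Submodule.pi Set.univ fun i ↦ R ∙ a i := by
  ext x
  simp [Submodule.mem_span_singleton, Classical.skolem, funext_iff, mul_comm]

variable [Fintype ι] [DecidableEq ι]

lemma dualMap_mulLeft_comp_dotProductEquiv (a : ι → R) :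
    (mulLeft R a).dualMap ∘ₗ (dotProductEquiv R ι).toLinearMap =
      (dotProductEquiv R ι).toLinearMap ∘ₗ mulLeft R a := by
  ext i j
  obtain rfl | hij := eq_or_ne i j <;> simp [*]

/-- A diagonal map and its transpose have isomorphic cokernels. -/
noncomputable def quotientRangeMulLeftEquivDual (a : ι → R) :
    ((ι → R) ⧸ range (mulLeft R a)) ≃ₗ[R] Dual R (ι → R) ⧸ range (mulLeft R a).dualMap :=
  Submodule.Quotient.equiv _ _ (dotProductEquiv R ι) (by
    rw [← LinearEquiv.range_comp (dotProductEquiv R ι), dualMap_mulLeft_comp_dotProductEquiv,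
      range_comp])

end Diagonal

section PID

variable (R : Type u) [CommRing R] [IsDomain R] [IsPrincipalIdealRing R]

lemma exists_equiv_quotient_range_mulLeft {T : Type*} [AddCommGroup T] [Module R T]
    [Module.Finite R T] (hT : IsTorsion R T) :
    ∃ (ι : Type u) (_ : Fintype ι) (a : ι → R), (∀ i, a i ≠ 0) ∧
      Nonempty (T ≃ₗ[R] (ι → R) ⧸ range (mulLeft R a)) := by
  classical
  obtain ⟨ι, _, p, hp, k, ⟨e⟩⟩ := equiv_directSum_of_isTorsion hT
  refine ⟨ι, ‹_›, fun i ↦ p i ^ k i, fun i ↦ pow_ne_zero _ (hp i).ne_zero, ⟨?_⟩⟩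
  rw [range_mulLeft_pi]
  exact e ≪≫ₗ DirectSum.linearEquivFunOnFintype R ι _ ≪≫ₗ (Submodule.quotientPi _).symm

theorem ext1_iso_torsion_general (M N : Type u) [AddCommGroup M] [Module R M] [Module.Finite R M]
    [AddCommGroup N] [Module R N] :
    Nonempty (((Ext R (ModuleCat.{u} R) 1).obj (.op (.of R M))).obj (.of R N) ≃ₗ[R]
      Submodule.torsion R M ⊗[R] N) := by
  classical
  obtain ⟨eM⟩ := nonempty_equiv_prod_quotient (Submodule.torsion R M)
  obtain ⟨ι, _, a, ha, ⟨eT⟩⟩ :=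
    exists_equiv_quotient_range_mulLeft R (Submodule.torsion_isTorsion (R := R) (M := M))
  have mulLeft_injective : Function.Injective (mulLeft R a) :=
    fun _ _ h ↦ funext fun i ↦ mul_left_cancel₀ (ha i) (congrFun h i)
  exact ⟨extOneEquivTensor N mulLeft_injective (eM ≪≫ₗ eT.prodCongr (.refl R _)) ≪≫ₗ
    TensorProduct.congr ((quotientRangeMulLeftEquivDual a).symm ≪≫ₗ eT.symm) (.refl R N)⟩

end PID

end Module

/-- Over a PID `R`, for a finitely generated `R`-module `M`, the module `Ext¹_R(M, R)`
is isomorphic to the torsion submodule of `M`. -/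
theorem ext1_iso_torsion
    (R : Type) [CommRing R] [IsDomain R] [IsPrincipalIdealRing R]
    (M : Type) [AddCommGroup M] [Module R M] [Module.Finite R M] :
    Nonempty ((ext1 R M R) ≃ₗ[R] ↥(Submodule.torsion R M)) :=
  (ext1_iso_torsion_general R M R).map (· ≪≫ₗ TensorProduct.rid R (Submodule.torsion R M))
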